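/- arXiv:math/0608395 — 2 statements merged into one kernel-verified Lean document; each statement's English description precedes it below -/
import Mathlib

section
/- Let V be a vector space. The map Θ : V ⊗ T(V) → DR¹(V) given by Θ(x⊗y) := dx·y, where DR¹(V) is the degree-one part of the quotient of the noncommutative forms Ω•(V) by (graded) commutators, is an isomorphism of vector spaces. -/
/- STATEMENT 2.  Θ : V ⊗ T(V) → DR¹(V), Θ(x⊗y) = dx·y, is an isomorphism of
vector spaces.  Here Ω¹(V) = T(V) ⊗ T⁺(V) is modelled as T(V) ⊗ (V ⊗ T(V))
(the multiplication map μ : V ⊗ T(V) → T(V), v⊗w ↦ v·w, identifies V ⊗ T(V)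
with the augmentation ideal T⁺(V)), and DR¹(V) is the quotient of Ω¹(V) by the
span of the commutators a·ω − ω·a, a ∈ T(V), ω ∈ Ω¹(V).  The element a is
decomposed as a scalar c plus a positive part μ(α); the right action is the
standard one (x⊗y)·a = x⊗ya − xy⊗a.  In DR¹ one has dx·y = y·dx, and Θ is
realised by x⊗y ↦ [y·dx] = [y ⊗ (x ⊗ 1)]. -/

open TensorProduct

noncomputable section

variable (V : Type) [AddCommGroup V] [Module ℂ V]

abbrev TA := TensorAlgebra ℂ V

/-- Ω¹(V) = T(V) ⊗ T⁺(V), with T⁺(V) modelled as V ⊗ T(V). -/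
abbrev Om := TA V ⊗[ℂ] (V ⊗[ℂ] TA V)

/-- μ : V ⊗ T(V) → T(V), the multiplication (identifying V⊗T(V) with T⁺(V)). -/
def mu : V ⊗[ℂ] TA V →ₗ[ℂ] TA V :=
  TensorProduct.lift ((LinearMap.mul ℂ (TA V)).comp (TensorAlgebra.ι ℂ))

/-- Left action of a ∈ T(V) on Ω¹(V). -/
def lAct2 (a : TA V) : Om V →ₗ[ℂ] Om V :=
  TensorProduct.map (LinearMap.mulLeft ℂ a) LinearMap.id

/-- Right action of a = c·1 + μ(α) ∈ T(V) on Ω¹(V):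
    (x ⊗ y)·a = c·(x⊗y) + x ⊗ (y·μ(α)) − (x·μ(y)) ⊗ α. -/
def rAct2 (c : ℂ) (α : V ⊗[ℂ] TA V) : Om V →ₗ[ℂ] Om V :=
  c • LinearMap.id
  + TensorProduct.map LinearMap.id
      (TensorProduct.map LinearMap.id (LinearMap.mulRight ℂ (mu V α)))
  - ((TensorProduct.mk ℂ (TA V) (V ⊗[ℂ] TA V)).flip α).comp
      ((LinearMap.mul' ℂ (TA V)).comp (TensorProduct.map LinearMap.id (mu V)))

/-- The span of commutators [T(V), Ω¹(V)]. -/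
def commSub : Submodule ℂ (Om V) :=
  Submodule.span ℂ
    {u | ∃ (c : ℂ) (α : V ⊗[ℂ] TA V) (ω : Om V),
      u = lAct2 V (algebraMap ℂ (TA V) c + mu V α) ω - rAct2 V c α ω}

/-- DR¹(V) = Ω¹(V)/[Ω,Ω]. -/
abbrev DR1 := Om V ⧸ commSub V

/-- Θ : V ⊗ T(V) → DR¹(V), Θ(x ⊗ y) = dx·y  ( = class of y·dx = y ⊗ (x⊗1) ). -/
def Theta : V ⊗[ℂ] TA V →ₗ[ℂ] DR1 V :=
  (commSub V).mkQ.comp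
    ((TensorProduct.comm ℂ (V ⊗[ℂ] TA V) (TA V)).toLinearMap.comp
      (TensorProduct.map ((TensorProduct.mk ℂ V (TA V)).flip (1 : TA V)) LinearMap.id))

abbrev WW := TA V →ₗ[ℂ] (V ⊗[ℂ] TA V)

/-- action of a generator on `WW × TA`. -/
def gen : V →ₗ[ℂ] Module.End ℂ (WW V × TA V) where
  toFun v :=
    LinearMap.prod
      (LinearMap.coprod
        (LinearMap.lcomp ℂ (V ⊗[ℂ] TA V) (LinearMap.mulRight ℂ (TensorAlgebra.ι ℂ v)))
        ((LinearMap.llcomp ℂ (TA V) (TA V) (V ⊗[ℂ] TA V) (TensorProduct.mk ℂ V (TA V) v)).comp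
          (LinearMap.mul ℂ (TA V))))
      ((LinearMap.mulLeft ℂ (TensorAlgebra.ι ℂ v)).comp (LinearMap.snd ℂ _ _))
  map_add' u v := by
    refine LinearMap.ext fun p => Prod.ext (LinearMap.ext fun x => ?_) ?_
    · simp [mul_add]; abel
    · simp [add_mul]
  map_smul' c v := by
    refine LinearMap.ext fun p => Prod.ext (LinearMap.ext fun x => ?_) ?_
    · simp [TensorProduct.smul_tmul']
    · simp

lemma gen_fst (v : V) (p : WW V × TA V) (x : TA V) :
    (gen V v p).1 x = p.1 (x * TensorAlgebra.ι ℂ v) + v ⊗ₜ (p.2 * x) := by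
  simp [gen]

lemma gen_snd (v : V) (p : WW V × TA V) :
    (gen V v p).2 = TensorAlgebra.ι ℂ v * p.2 := by
  simp [gen]

def phi : TA V →ₐ[ℂ] Module.End ℂ (WW V × TA V) := TensorAlgebra.lift ℂ (gen V)

/-- `DD a x` is the class of `x · da`. -/
def DD : TA V →ₗ[ℂ] WW V :=
  (LinearMap.fst ℂ (WW V) (TA V)).comp ((phi V).toLinearMap.flip (0, 1))

lemma DD_apply (a : TA V) : DD V a = (phi V a (0, 1)).1 := rfl

lemma phi_spec (a : TA V) : ∀ (p : WW V × TA V),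
    (phi V a p).2 = a * p.2 ∧
      ∀ x, (phi V a p).1 x = p.1 (x * a) + DD V a (p.2 * x) := by
  induction a using TensorAlgebra.induction with
  | algebraMap r =>
    intro p
    simp [DD_apply, Algebra.algebraMap_eq_smul_one]
  | ι v =>
    intro p
    simp [DD_apply, phi, gen_fst, gen_snd]
  | mul a b ha hb =>
    intro p
    simp only [DD_apply, map_mul, Module.End.mul_apply] at *
    refine ⟨by rw [(ha _).1, (hb _).1, mul_assoc], fun x => ?_⟩
    rw [(ha _).2, (ha (phi V b (0,1))).2, (hb _).2, (hb _).1, (hb (0,1)).2, (hb (0,1)).1]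
    simp [mul_assoc, add_assoc]
  | add a b ha hb =>
    intro p
    simp only [map_add, LinearMap.add_apply, Prod.fst_add, Prod.snd_add]
    refine ⟨by rw [(ha _).1, (hb _).1, add_mul], fun x => ?_⟩
    rw [(ha _).2, (hb _).2, mul_add, map_add]
    abel

lemma DD_mul (a b x : TA V) : DD V (a * b) x = DD V a (b * x) + DD V b (x * a) := by
  rw [DD_apply, map_mul, Module.End.mul_apply, (phi_spec V a _).2, (phi_spec V b _).1,
    ← DD_apply, mul_one, add_comm]

lemma DD_ι (v : V) (x : TA V) : DD V (TensorAlgebra.ι ℂ v) x = v ⊗ₜ x := by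
  simp [DD_apply, phi, gen_fst]

def Psi : Om V →ₗ[ℂ] V ⊗[ℂ] TA V := TensorProduct.lift ((DD V).comp (mu V)).flip

lemma Psi_tmul (x : TA V) (y : V ⊗[ℂ] TA V) : Psi V (x ⊗ₜ y) = DD V (mu V y) x := rfl

lemma mu_tmul (v : V) (w : TA V) : mu V (v ⊗ₜ w) = TensorAlgebra.ι ℂ v * w := rfl

lemma mu_mul (y : V ⊗[ℂ] TA V) (a : TA V) :
    mu V (TensorProduct.map LinearMap.id (LinearMap.mulRight ℂ a) y) = mu V y * a := by
  induction y with
  | zero => simp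
  | tmul v w => simp [mu_tmul, mul_assoc]
  | add y z hy hz => simp only [map_add, hy, hz, add_mul]

lemma rAct2_tmul (c : ℂ) (α : V ⊗[ℂ] TA V) (x : TA V) (y : V ⊗[ℂ] TA V) :
    rAct2 V c α (x ⊗ₜ y) = c • (x ⊗ₜ y)
      + x ⊗ₜ (TensorProduct.map LinearMap.id (LinearMap.mulRight ℂ (mu V α)) y)
      - (x * mu V y) ⊗ₜ α := by
  simp [rAct2]

lemma lAct2_tmul (a x : TA V) (y : V ⊗[ℂ] TA V) :
    lAct2 V a (x ⊗ₜ y) = (a * x) ⊗ₜ y := by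
  simp [lAct2]

lemma comm_le : commSub V ≤ LinearMap.ker (Psi V) := by
  refine Submodule.span_le.2 ?_
  rintro _ ⟨c, α, ω, rfl⟩
  rw [SetLike.mem_coe, LinearMap.mem_ker]
  induction ω using TensorProduct.induction_on with
  | zero => simp
  | tmul x y =>
    rw [rAct2_tmul, lAct2_tmul]
    simp only [map_sub, map_add, map_smul, Psi_tmul, mu_mul, DD_mul, add_mul]
    rw [← Algebra.smul_def, map_smul]
    abel
  | add y z hy hz =>
    rw [map_add, map_add, add_sub_add_comm, map_add, hy, hz, add_zero]

lemma Theta_tmul (v : V) (y : TA V) :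
    Theta V (v ⊗ₜ y) = (commSub V).mkQ (y ⊗ₜ (v ⊗ₜ 1)) := by
  simp [Theta]

/-- moving a generator across. -/
lemma step (x z : TA V) (v u : V) :
    (commSub V).mkQ (x ⊗ₜ (v ⊗ₜ (z * TensorAlgebra.ι ℂ u))) =
      (commSub V).mkQ ((TensorAlgebra.ι ℂ u * x) ⊗ₜ (v ⊗ₜ z))
        + Theta V (u ⊗ₜ (x * (TensorAlgebra.ι ℂ v * z))) := by
  rw [Theta_tmul, ← map_add]
  symm
  rw [← sub_eq_zero, ← map_sub, Submodule.mkQ_apply, Submodule.Quotient.mk_eq_zero]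
  refine Submodule.subset_span ⟨0, u ⊗ₜ 1, x ⊗ₜ (v ⊗ₜ z), ?_⟩
  rw [rAct2_tmul, lAct2_tmul]
  simp [mu_tmul]
  abel

lemma surj_aux (w : TA V) : ∀ z : TA V,
    (∀ (x : TA V) (v : V), (commSub V).mkQ (x ⊗ₜ (v ⊗ₜ z)) ∈ LinearMap.range (Theta V)) →
    ∀ (x : TA V) (v : V), (commSub V).mkQ (x ⊗ₜ (v ⊗ₜ (z * w))) ∈ LinearMap.range (Theta V) := by
  induction w using TensorAlgebra.induction with
  | algebraMap r =>
    intro z hz x v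
    rw [Algebra.algebraMap_eq_smul_one, mul_smul_comm, mul_one, TensorProduct.tmul_smul,
      TensorProduct.tmul_smul, map_smul]
    exact Submodule.smul_mem _ _ (hz x v)
  | ι u =>
    intro z hz x v
    rw [step]
    exact Submodule.add_mem _ (hz _ _) (LinearMap.mem_range_self _ _)
  | mul a b ha hb =>
    intro z hz x v
    rw [← mul_assoc]
    exact hb _ (ha z hz) x v
  | add a b ha hb =>
    intro z hz x v
    rw [mul_add, TensorProduct.tmul_add, TensorProduct.tmul_add, map_add]
    exact Submodule.add_mem _ (ha z hz x v) (hb z hz x v)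

lemma Theta_surj : Function.Surjective (Theta V) := by
  intro q
  obtain ⟨ω, rfl⟩ := (commSub V).mkQ_surjective q
  change _ ∈ LinearMap.range (Theta V)
  induction ω using TensorProduct.induction_on with
  | zero => rw [map_zero]; exact Submodule.zero_mem _
  | add y z hy hz => rw [map_add]; exact Submodule.add_mem _ hy hz
  | tmul x y =>
    induction y with
    | zero => rw [TensorProduct.tmul_zero, map_zero]; exact Submodule.zero_mem _
    | add y z hy hz =>
      rw [TensorProduct.tmul_add, map_add]; exact Submodule.add_mem _ hy hz
    | tmul v w =>
      have := surj_aux V w 1 (fun x v => ⟨v ⊗ₜ x, Theta_tmul V v x⟩) x v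
      rwa [one_mul] at this

lemma Theta_inj : Function.Injective (Theta V) := by
  have h : ((commSub V).liftQ (Psi V) (comm_le V)).comp (Theta V) = LinearMap.id := by
    refine TensorProduct.ext' fun v y => ?_
    rw [LinearMap.comp_apply, Theta_tmul, Submodule.mkQ_apply, Submodule.liftQ_apply, Psi_tmul,
      mu_tmul, mul_one, DD_ι, LinearMap.id_apply]
  exact Function.LeftInverse.injective
    (g := (commSub V).liftQ (Psi V) (comm_le V)) (fun p => LinearMap.congr_fun h p)

/-- Θ is an isomorphism of vector spaces (Lemma 2.9). -/
theorem statement_2 : Function.Bijective (Theta V) := 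
  ⟨Theta_inj V, Theta_surj V⟩

end
end

section
/- On the space h_{2n|m} := ⊕_{i≥0} (V^{⊗i})_{Z_i} of cyclic words in V := ℂ^{2n|m}, the bracket {a,b} := (−1)^{|a|} L_α(b) (where α is the symplectic vector field with i_α(ω) = −da for the standard even symplectic form ω) is super skew-symmetric: {a,b} = −(−1)^{|a||b|}{b,a}. -/
/- STATEMENT 5.  On the space h_{2n|m} = ⊕ᵢ (V^{⊗i})_{Zᵢ} of cyclic words in
V = ℂ^{2n|m}, the bracket {a,b} (given, equivalently, by the explicit
contraction formula of Lemma 2.23) is super skew-symmetric: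
{a,b} = −(−1)^{|a||b|} {b,a}.  Cyclic words are modelled as the quotient of the
free vector space on words in the standard homogeneous basis by the signed
cyclic-rotation relations; the claim is stated on word representatives, the
equality holding in the quotient. -/

noncomputable section

/-- The standard homogeneous basis of V = ℂ^{2n|m}: p₁,…,pₙ (= inl (inl i)),
q₁,…,qₙ (= inl (inr i)) even, and x₁,…,x_m (= inr j) odd. -/
abbrev BB (n m : ℕ) : Type := (Fin n ⊕ Fin n) ⊕ Fin m

/-- Parity of a basis element. -/
def par {n m : ℕ} : BB n m → ℕ
  | .inl _ => 0
  | .inr _ => 1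

/-- Parity of a word. -/
def pL {n m : ℕ} (ℓ : List (BB n m)) : ℕ := (ℓ.map par).sum

/-- The canonical even symplectic form ⟨−,−⟩ on ℂ^{2n|m}:
⟨pᵢ,qⱼ⟩ = δᵢⱼ = −⟨qⱼ,pᵢ⟩, ⟨xᵢ,xⱼ⟩ = δᵢⱼ, all other pairings zero. -/
def bform {n m : ℕ} : BB n m → BB n m → ℂ
  | .inl (.inl i), .inl (.inr j) => if i = j then 1 else 0
  | .inl (.inr i), .inl (.inl j) => if i = j then -1 else 0
  | .inr i, .inr j => if i = j then 1 else 0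
  | _, _ => 0

/-- The underlying vector space of the tensor algebra T(V):  the free vector
space on words in the basis. -/
abbrev FW (n m : ℕ) : Type := List (BB n m) →₀ ℂ

/-- The signed cyclic-rotation relations: the quotient FW/cycRel is the space
of cyclic words ⊕ᵢ (V^{⊗i})_{Zᵢ} (with Koszul signs). -/
def cycRel (n m : ℕ) : Submodule ℂ (FW n m) :=
  Submodule.span ℂ
    {u | ∃ (a : BB n m) (t : List (BB n m)),
      u = Finsupp.single (a :: t) (1 : ℂ)
          - ((-1 : ℂ) ^ (par a * pL t)) • Finsupp.single (t ++ [a]) 1}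

/-- The Koszul sign of the rotation z^{i}·(word with its i-th letter deleted). -/
def rdC {n m : ℕ} (ℓ : List (BB n m)) (i : ℕ) : ℂ :=
  (-1 : ℂ) ^ (pL (ℓ.take i) * pL (ℓ.drop (i + 1)))

/-- The word z^{i}·(ℓ with its i-th letter deleted). -/
def rdW {n m : ℕ} (ℓ : List (BB n m)) (i : ℕ) : List (BB n m) :=
  ℓ.drop (i + 1) ++ ℓ.take i

/-- The explicit bracket of Lemma 2.23 on cyclic words:
{a₁⋯a_k, b₁⋯b_l} = Σᵢⱼ (−1)^p ⟨aᵢ,bⱼ⟩ (z^{i−1}·a₁⋯âᵢ⋯a_k)(z^{j−1}·b₁⋯b̂ⱼ⋯b_l),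
p = |aᵢ|(|a_{i+1}|+⋯+|a_k|+|b₁|+⋯+|b_{j−1}|). -/
def bracketWord {n m : ℕ} (a b : List (BB n m)) : FW n m :=
  ∑ i : Fin a.length, ∑ j : Fin b.length,
    (((-1 : ℂ) ^ (par (a.get i) * (pL (a.drop (i.val + 1)) + pL (b.take j.val))))
        * bform (a.get i) (b.get j) * rdC a i.val * rdC b j.val)
      • Finsupp.single (rdW a i.val ++ rdW b j.val) (1 : ℂ)

theorem pL_append {n m : ℕ} (u v : List (BB n m)) : pL (u ++ v) = pL u + pL v := by
  simp [pL]

theorem pL_cons {n m : ℕ} (x : BB n m) (v : List (BB n m)) : pL (x :: v) = par x + pL v := by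
  simp [pL]

theorem neg_one_pow_congr_mod {s t : ℕ} (h : s % 2 = t % 2) : (-1 : ℂ) ^ s = (-1 : ℂ) ^ t := by
  rw [neg_one_pow_eq_pow_mod_two, h, ← neg_one_pow_eq_pow_mod_two]

theorem mkQ_rot {n m : ℕ} (u v : List (BB n m)) :
    (cycRel n m).mkQ (Finsupp.single (u ++ v) (1 : ℂ))
      = ((-1 : ℂ) ^ (pL u * pL v)) • (cycRel n m).mkQ (Finsupp.single (v ++ u) (1 : ℂ)) := by
  induction u generalizing v with
  | nil => simp [pL]
  | cons x u ih =>
    have h : (cycRel n m).mkQ (Finsupp.single (x :: (u ++ v)) (1 : ℂ))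
        = ((-1 : ℂ) ^ (par x * pL (u ++ v))) •
          (cycRel n m).mkQ (Finsupp.single ((u ++ v) ++ [x]) (1 : ℂ)) := by
      rw [← map_smul, ← sub_eq_zero, ← map_sub, Submodule.mkQ_apply,
        Submodule.Quotient.mk_eq_zero]
      exact Submodule.subset_span ⟨x, u ++ v, rfl⟩
    rw [List.cons_append, h, List.append_assoc, ih (v ++ [x]), smul_smul, ← pow_add]
    have e : v ++ [x] ++ u = v ++ x :: u := by simp
    rw [e]
    congr 1
    apply neg_one_pow_congr_mod
    have : pL [x] = par x := by simp [pL]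
    rw [pL_append, pL_append, this, pL_cons]
    have e2 : par x * (pL u + pL v) + pL u * (pL v + par x)
        = (par x + pL u) * pL v + 2 * (par x * pL u) := by ring
    rw [e2]; omega

theorem pL_split {n m : ℕ} (a : List (BB n m)) (i : Fin a.length) :
    pL a = pL (a.take i.val) + (par (a.get i) + pL (a.drop (i.val + 1))) := by
  conv_lhs => rw [← List.take_append_drop i.val a, List.drop_eq_getElem_cons i.isLt]
  rw [pL_append, pL_cons]; rfl

theorem bform_swap {n m : ℕ} (x y : BB n m) :
    bform x y = 0 ∧ bform y x = 0 ∨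
      par x = par y ∧ bform y x = (-1 : ℂ) ^ (par x + 1) * bform x y := by
  rcases x with (x | x) | x <;> rcases y with (y | y) | y <;>
    simp [bform, par, eq_comm, apply_ite]

theorem sign_aux (p A1 A2 B1 B2 : ℕ) (hp : p = 0 ∨ p = 1) :
    (p * (A2 + B1) + (A1 * A2 + B1 * B2)) % 2
      = (1 + (A1 + (p + A2)) * (B1 + (p + B2)) + (p * (B2 + A1) + (p + 1)
        + (A1 * A2 + B1 * B2) + (B2 + B1) * (A2 + A1))) % 2 := by
  rcases hp with rfl | rfl
  · have : 1 + (A1 + (0 + A2)) * (B1 + (0 + B2)) + (0 * (B2 + A1) + (0 + 1)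
        + (A1 * A2 + B1 * B2) + (B2 + B1) * (A2 + A1))
        = 0 * (A2 + B1) + (A1 * A2 + B1 * B2) + 2 * (1 + (A1 + A2) * (B1 + B2)) := by ring
    rw [this]; omega
  · have : 1 + (A1 + (1 + A2)) * (B1 + (1 + B2)) + (1 * (B2 + A1) + (1 + 1)
        + (A1 * A2 + B1 * B2) + (B2 + B1) * (A2 + A1))
        = 1 * (A2 + B1) + (A1 * A2 + B1 * B2)
          + 2 * (2 + A1 + B2 + (A1 + A2) * (B1 + B2)) := by ring
    rw [this]; omega

/-- Super skew-symmetry of the bracket on cyclic words. -/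
theorem statement_5 (n m : ℕ) (a b : List (BB n m)) :
    (cycRel n m).mkQ (bracketWord a b)
      = (-((-1 : ℂ) ^ (pL a * pL b))) • (cycRel n m).mkQ (bracketWord b a) := by
  simp only [bracketWord, map_sum, map_smul]
  rw [Finset.sum_comm, Finset.smul_sum]
  refine Finset.sum_congr rfl fun j _ => ?_
  rw [Finset.smul_sum]
  refine Finset.sum_congr rfl fun i _ => ?_
  rcases bform_swap (a.get i) (b.get j) with ⟨h1, h2⟩ | ⟨h1, h2⟩
  · rw [h1, h2]; simp
  · rw [mkQ_rot (rdW b j.val) (rdW a i.val), smul_smul, smul_smul, h2, ← h1]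
    congr 1
    have hp : par (a.get i) = 0 ∨ par (a.get i) = 1 := by
      rcases a.get i with x | x <;> simp [par]
    have ha := pL_split a i
    have hb := pL_split b j
    rw [← h1] at hb
    rw [ha, hb]
    simp only [rdC, rdW, pL_append]
    have key := neg_one_pow_congr_mod (sign_aux (par (a.get i)) (pL (a.take i.val))
      (pL (a.drop (i.val + 1))) (pL (b.take j.val)) (pL (b.drop (j.val + 1))) hp)
    generalize par (a.get i) = p at *
    generalize bform (a.get i) (b.get j) = c at *
    generalize pL (a.take i.val) = A1 at *
    generalize pL (a.drop (i.val + 1)) = A2 at *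
    generalize pL (b.take j.val) = B1 at *
    generalize pL (b.drop (j.val + 1)) = B2 at *
    rw [pow_add _ (p * (A2 + B1)), pow_add _ (A1 * A2)] at key
    rw [show ∀ x y z : ℂ, x * c * y * z = x * (y * z) * c by intros; ring, key]
    rw [pow_add _ (1 + _), pow_add _ 1, pow_add _ _ ((B2 + B1) * (A2 + A1)),
      pow_add _ _ (A1 * A2 + B1 * B2), pow_add _ (p * (B2 + A1)), pow_add _ (A1 * A2)]
    ring

end
end
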